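/- Let X be a real Banach space and Y a real normed vector space, and let j : Y → X be an injective continuous linear map which maps every bounded subset of Y to a relatively compact subset of X. Let G : X → Y be Lipschitz on every compact subset of X, and let F be a family of maps from X to Y such that for every compact Q ⊆ X and every η > 0 there exists Ĝ ∈ F with ‖G(x) − Ĝ(x)‖_Y < η for all x ∈ Q. For a map H : X → Y define its j-iterates T_H^(1) = H and T_H^(m+1)(x) = H(j(T_H^(m)(x))). Let K ⊆ X be compact and suppose there is a map u : X → Y such that T_G^(n) converges to u uniformly on K, i.e. for every η > 0 there exists N with ‖T_G^(n)(a) − u(a)‖_Y < η for all n ≥ N and a ∈ K. Then for every ε > 0 there exist an integer n ≥ 1 and a map Ĝ ∈ F such that ‖T_Ĝ^(n)(a) − u(a)‖_Y < ε for every a ∈ K. -/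

import Mathlib

/-- The `j`-iterates of a map `H : X → Y`: `jIter j H 1 = H` and, for `m ≥ 1`,
`jIter j H (m+1) x = H (j (jIter j H m x))`, i.e. `H` is composed with its own
output viewed back in `X` through `j`. (The value at index `0` is junk.) -/
def jIter {X Y : Type*} (j : Y → X) (H : X → Y) : ℕ → X → Y
  | 0 => H
  | 1 => H
  | m + 2 => fun x => H (j (jIter j H (m + 1) x))

/-!
When the limit `φ` is continuous, locally uniform convergence `φ i → φ` amounts to joint
convergence of `φ i y` to `φ x` as `i` and `y → x` vary simultaneously, which is stable under
composition. If every point of `Y` has a neighbourhood which `j` maps into a compact set, then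
uniform convergence `H i → G` on compact sets gives joint convergence of `H i ∘ j` to `G ∘ j`;
hence the iterates of `H i` converge jointly to those of `G`, and so uniformly on compact sets.
This applies to `H → G` in the topology of compact convergence, where `G` is in the closure of `F`.
-/

open Filter Set Topology UniformConvergence

theorem tendstoLocallyUniformlyOn_iff_tendsto_prod_nhdsWithin {ι α β : Type*} [TopologicalSpace α]
    [UniformSpace β] {F : ι → α → β} {f : α → β} {l : Filter ι} {s : Set α}
    (hf : ContinuousOn f s) :
    TendstoLocallyUniformlyOn F f l s ↔
      ∀ x ∈ s, Tendsto (fun q : ι × α => F q.1 q.2) (l ×ˢ 𝓝[s] x) (𝓝 (f x)) := by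
  rw [tendstoLocallyUniformlyOn_iff_forall_tendsto]
  refine forall₂_congr fun x hx => ?_
  have hfx : Tendsto (fun q : ι × α => f q.2) (l ×ˢ 𝓝[s] x) (𝓝 (f x)) :=
    (hf x hx).tendsto.comp tendsto_snd
  exact ⟨hfx.congr_uniformity, fun hF => (hfx.prodMk_nhds hF).mono_right (nhds_le_uniformity _)⟩

theorem mem_closure_compactConvergence_iff {X Y : Type*} [TopologicalSpace X]
    [PseudoMetricSpace Y] {𝓕 : Set (X →ᵤ[{Q | IsCompact Q}] Y)}
    {G : X →ᵤ[{Q | IsCompact Q}] Y} :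
    G ∈ closure 𝓕 ↔ ∀ Q : Set X, IsCompact Q → ∀ η : ℝ, 0 < η →
      ∃ H ∈ 𝓕, ∀ x ∈ Q, dist (UniformOnFun.toFun _ G x) (UniformOnFun.toFun _ H x) < η := by
  have directed : DirectedOn (· ⊆ ·) {Q : Set X | IsCompact Q} :=
    directedOn_of_sup_mem fun _ _ => IsCompact.union
  rw [mem_closure_iff_nhds_basis (UniformOnFun.hasBasis_nhds_of_basis X Y _ G
    ⟨∅, isCompact_empty⟩ directed Metric.uniformity_basis_dist)]
  simp only [Prod.forall, and_imp, UniformOnFun.gen, mem_ofPred_eq, dist_comm]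
  tauto

theorem exists_isCompact_preimage_mem_nhds {X Y : Type*} [TopologicalSpace X]
    [PseudoMetricSpace Y] {j : Y → X}
    (hj : ∀ B : Set Y, Bornology.IsBounded B → IsCompact (closure (j '' B))) (y : Y) :
    ∃ C, IsCompact C ∧ j ⁻¹' C ∈ 𝓝 y :=
  ⟨closure (j '' Metric.ball y 1), hj _ Metric.isBounded_ball,
    mem_of_superset (Metric.ball_mem_nhds y one_pos)
      ((subset_preimage_image j _).trans (preimage_mono subset_closure))⟩

section JIter

variable {X Y : Type*} {j : Y → X} {G : X → Y}

theorem continuousOn_jIter [TopologicalSpace X] [TopologicalSpace Y] {s : Set X}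
    (hG : ContinuousOn G s) (hGj : Continuous (G ∘ j)) : ∀ n, ContinuousOn (jIter j G n) s
  | 0 => hG
  | 1 => hG
  | n + 2 => hGj.comp_continuousOn (continuousOn_jIter hG hGj (n + 1))

theorem tendsto_jIter_prod {ι : Type*} [TopologicalSpace Y] {H : ι → X → Y} {l : Filter ι}
    {k : Filter X} {x : X}
    (hH : Tendsto (fun q : ι × X => H q.1 q.2) (l ×ˢ k) (𝓝 (G x)))
    (hHj : ∀ y, Tendsto (fun q : ι × Y => H q.1 (j q.2)) (l ×ˢ 𝓝 y) (𝓝 (G (j y)))) :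
    ∀ n, Tendsto (fun q : ι × X => jIter j (H q.1) n q.2) (l ×ˢ k) (𝓝 (jIter j G n x))
  | 0 => hH
  | 1 => hH
  | n + 2 => (hHj _).comp (tendsto_fst.prodMk (tendsto_jIter_prod hH hHj (n + 1)))

theorem tendstoUniformlyOn_jIter {ι : Type*} [TopologicalSpace X] [UniformSpace Y]
    {H : ι → X → Y} {l : Filter ι} (hj : Continuous j)
    (hj_cpt : ∀ y, ∃ C, IsCompact C ∧ j ⁻¹' C ∈ 𝓝 y)
    (hG : ∀ Q, IsCompact Q → ContinuousOn G Q)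
    (hH : ∀ Q, IsCompact Q → TendstoUniformlyOn H G l Q) {K : Set X} (hK : IsCompact K) (n : ℕ) :
    TendstoUniformlyOn (fun i => jIter j (H i) n) (jIter j G n) l K := by
  have tendsto_H {Q : Set X} (hQ : IsCompact Q) {x : X} (hx : x ∈ Q) :
      Tendsto (fun q : ι × X => H q.1 q.2) (l ×ˢ 𝓝[Q] x) (𝓝 (G x)) :=
    (tendstoLocallyUniformlyOn_iff_tendsto_prod_nhdsWithin (hG Q hQ)).1
      (hH Q hQ).tendstoLocallyUniformlyOn x hx
  have tendsto_j (y : Y) : ∃ C, IsCompact C ∧ j y ∈ C ∧ Tendsto j (𝓝 y) (𝓝[C] (j y)) := by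
    obtain ⟨C, hC, hCy⟩ := hj_cpt y
    exact ⟨C, hC, mem_preimage.1 (mem_of_mem_nhds hCy),
      tendsto_nhdsWithin_iff.2 ⟨hj.tendsto y, hCy⟩⟩
  have tendsto_Hj (y : Y) :
      Tendsto (fun q : ι × Y => H q.1 (j q.2)) (l ×ˢ 𝓝 y) (𝓝 (G (j y))) := by
    obtain ⟨C, hC, hyC, hjC⟩ := tendsto_j y
    exact (tendsto_H hC hyC).comp (tendsto_id.prodMap hjC)
  have continuous_Gj : Continuous (G ∘ j) := continuous_iff_continuousAt.2 fun y => by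
    obtain ⟨C, hC, hyC, hjC⟩ := tendsto_j y
    exact (hG C hC (j y) hyC).tendsto.comp hjC
  rw [← tendstoLocallyUniformlyOn_iff_tendstoUniformlyOn_of_compact hK,
    tendstoLocallyUniformlyOn_iff_tendsto_prod_nhdsWithin
      (continuousOn_jIter (hG K hK) continuous_Gj n)]
  exact fun x hx => tendsto_jIter_prod (tendsto_H hK hx) tendsto_Hj n

theorem jIter_approx_limit_general [TopologicalSpace X] [PseudoMetricSpace Y]
    (hj : Continuous j) (hj_cpt : ∀ y, ∃ C, IsCompact C ∧ j ⁻¹' C ∈ 𝓝 y)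
    (hG : ∀ Q, IsCompact Q → ContinuousOn G Q) {F : Set (X → Y)}
    (hF : ∀ Q, IsCompact Q → ∀ η : ℝ, 0 < η → ∃ Ghat ∈ F, ∀ x ∈ Q, dist (G x) (Ghat x) < η)
    {K : Set X} (hK : IsCompact K) {u : X → Y} (hu : TendstoUniformlyOn (jIter j G) u atTop K)
    {ε : ℝ} (hε : 0 < ε) :
    ∃ n : ℕ, 1 ≤ n ∧ ∃ Ghat ∈ F, ∀ a ∈ K, dist (jIter j Ghat n a) (u a) < ε := by
  obtain ⟨n, hn, hun⟩ := ((eventually_ge_atTop 1).and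
    (Metric.tendstoUniformlyOn_iff.1 hu (ε / 2) (half_pos hε))).exists
  let toFun := UniformOnFun.toFun (β := Y) {Q : Set X | IsCompact Q}
  have frequently_mem : ∃ᶠ H in 𝓝 (toFun.symm G), toFun H ∈ F :=
    mem_closure_iff_frequently.1 (mem_closure_compactConvergence_iff.2 hF)
  have eventually_close : ∀ᶠ H in 𝓝 (toFun.symm G), ∀ a ∈ K,
      dist (jIter j G n a) (jIter j (toFun H) n a) < ε / 2 :=
    Metric.tendstoUniformlyOn_iff.1 (tendstoUniformlyOn_jIter hj hj_cpt hG
      (UniformOnFun.tendsto_iff_tendstoUniformlyOn.1 tendsto_id) hK n) _ (half_pos hε)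
  obtain ⟨H, hHF, hGH⟩ := (frequently_mem.and_eventually eventually_close).exists
  refine ⟨n, hn, toFun H, hHF, fun a ha => ?_⟩
  calc dist (jIter j (toFun H) n a) (u a)
      = dist (u a) (jIter j (toFun H) n a) := dist_comm _ _
    _ ≤ dist (u a) (jIter j G n a) + dist (jIter j G n a) (jIter j (toFun H) n a) :=
        dist_triangle _ _ _
    _ < ε / 2 + ε / 2 := add_lt_add (hun a ha) (hGH a ha)
    _ = ε := add_halves ε

end JIter

/-- Given a compact embedding `j : Y → X`, a locally Lipschitz map `G : X → Y`
approximable uniformly on compact sets by members of a family `F`, and a map `u`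
which is the uniform limit on a compact set `K` of the `j`-iterates of `G`, for
every `ε > 0` some `n`-th `j`-iterate of some `Ĝ ∈ F` is uniformly `ε`-close to
`u` on `K`. -/
theorem jIter_approx_limit
    {X Y : Type*} [NormedAddCommGroup X] [NormedSpace ℝ X] [CompleteSpace X]
    [NormedAddCommGroup Y] [NormedSpace ℝ Y]
    (j : Y →L[ℝ] X) (hj_inj : Function.Injective j)
    (hj_cpt : ∀ B : Set Y, Bornology.IsBounded B → IsCompact (closure (⇑j '' B)))
    (G : X → Y)
    (hG : ∀ Q : Set X, IsCompact Q → ∃ L : ℝ, 0 ≤ L ∧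
      ∀ x ∈ Q, ∀ y ∈ Q, ‖G x - G y‖ ≤ L * ‖x - y‖)
    (F : Set (X → Y))
    (hF : ∀ Q : Set X, IsCompact Q → ∀ η : ℝ, 0 < η →
      ∃ Ghat ∈ F, ∀ x ∈ Q, ‖G x - Ghat x‖ < η)
    (K : Set X) (hK : IsCompact K) (u : X → Y)
    (hu : ∀ η : ℝ, 0 < η → ∃ N : ℕ, ∀ n : ℕ, N ≤ n → ∀ a ∈ K,
      ‖jIter (⇑j) G n a - u a‖ < η)
    (ε : ℝ) (hε : 0 < ε) :
    ∃ n : ℕ, 1 ≤ n ∧ ∃ Ghat ∈ F, ∀ a ∈ K,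
      ‖jIter (⇑j) Ghat n a - u a‖ < ε := by
  have continuousOn_G (Q : Set X) (hQ : IsCompact Q) : ContinuousOn G Q := by
    obtain ⟨L, -, hL⟩ := hG Q hQ
    exact (LipschitzOnWith.of_dist_le' (by simpa only [dist_eq_norm] using hL)).continuousOn
  simpa only [dist_eq_norm] using jIter_approx_limit_general j.continuous
    (exists_isCompact_preimage_mem_nhds hj_cpt) continuousOn_G
    (by simpa only [dist_eq_norm] using hF) hK
    (by simpa only [Metric.tendstoUniformlyOn_iff, dist_eq_norm', eventually_atTop] using hu) hε
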